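/- If E is a semi-decidable equivalence relation on ℕ in which every equivalence class is infinite, then there exist an enumeration ν of E with every preimage ν⁻¹(e) infinite for e ∈ E, and codings ξ and ζ of ν such that for all n ∈ ℕ₊, ξ(n) < ζ(n) < ξ(n+1). -/

import Mathlib

/-- `E` is an equivalence relation on ℕ, viewed as a set of pairs:
reflexive, symmetric, transitive. -/
def IsEquivRel (E : Set (ℕ × ℕ)) : Prop :=
  (∀ n, (n, n) ∈ E) ∧ (∀ ⦃i j⦄, (i, j) ∈ E → (j, i) ∈ E) ∧
    (∀ ⦃i j k⦄, (i, j) ∈ E → (j, k) ∈ E → (i, k) ∈ E)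

/-- `H` is a symmetric relation. -/
def IsSymRel (H : Set (ℕ × ℕ)) : Prop := ∀ ⦃i j⦄, (i, j) ∈ H → (j, i) ∈ H

/-- `H` is a transitive relation. -/
def IsTransRel (H : Set (ℕ × ℕ)) : Prop :=
  ∀ ⦃i j k⦄, (i, j) ∈ H → (j, k) ∈ H → (i, k) ∈ H

/-- A relation on ℕ is decidable if membership in it is a computable predicate. -/
def DecidableRelSet (R : Set (ℕ × ℕ)) : Prop :=
  ComputablePred (fun p : ℕ × ℕ => p ∈ R)

/-- `ν : ℕ₊ → ℕ × ℕ` (modelled as a function on ℕ, restricted to positive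
arguments) is an enumeration of `R`: a computable function whose range (over
positive arguments) is `R`. -/
def IsEnumeration (ν : ℕ → ℕ × ℕ) (R : Set (ℕ × ℕ)) : Prop :=
  Computable ν ∧ R = {e | ∃ n, 1 ≤ n ∧ ν n = e}

/-- A relation on ℕ is semi-decidable (computably enumerable) if it is the
range of a computable function `ν : ℕ₊ → ℕ × ℕ`. -/
def SemiDecidableRel (R : Set (ℕ × ℕ)) : Prop := ∃ ν, IsEnumeration ν R

/-- A subset of ℕ is semi-decidable (computably enumerable) if it is the range
of a computable function on positive arguments. -/
def SemiDecidableSet (A : Set ℕ) : Prop :=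
  ∃ f : ℕ → ℕ, Computable f ∧ A = {a | ∃ n, 1 ≤ n ∧ f n = a}

/-- `E` is IC: every equivalence class `[i]_E = {j | (i,j) ∈ E}` is infinite. -/
def IC (E : Set (ℕ × ℕ)) : Prop := ∀ i, {j | (i, j) ∈ E}.Infinite

/-- `E` is FC: every equivalence class `[i]_E = {j | (i,j) ∈ E}` is finite. -/
def FC (E : Set (ℕ × ℕ)) : Prop := ∀ i, {j | (i, j) ∈ E}.Finite

/-- Composition of relations: `RS = {(i,k) | ∃ j, (i,j) ∈ R ∧ (j,k) ∈ S}`. -/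
def relComp (R S : Set (ℕ × ℕ)) : Set (ℕ × ℕ) :=
  {p | ∃ j, (p.1, j) ∈ R ∧ (j, p.2) ∈ S}

/-- Converse relation: `R⁻¹ = {(j,i) | (i,j) ∈ R}`. -/
def relInv (R : Set (ℕ × ℕ)) : Set (ℕ × ℕ) := {p | (p.2, p.1) ∈ R}

/-- Transitive closure of a relation, `tc R = ⋃_{n ≥ 1} Rⁿ`. -/
def tc (R : Set (ℕ × ℕ)) : Set (ℕ × ℕ) :=
  {p | Relation.TransGen (fun i j => (i, j) ∈ R) p.1 p.2}

/-- `ξ` is a coding of the enumeration `ν` (with `π = ν ∘ ξ`):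
a computable `ξ : ℕ₊ → ℕ₊` such that `1 < ξ(1)`, `π₁(π(1)) = π₁(ν(1))`,
`max {1, π₁(ν(1))} < π₂(π(1))`, and for every `n ≥ 1`: `ξ(n) < ξ(n+1)`,
`π₁(ν(ξ(n+1))) = π₁(ν(n+1))`, and
`max {π₁(π(n+1)), π₂(π(n))} < π₂(π(n+1))`. -/
def IsCoding (ν : ℕ → ℕ × ℕ) (ξ : ℕ → ℕ) : Prop :=
  Computable ξ ∧
  1 < ξ 1 ∧ (ν (ξ 1)).1 = (ν 1).1 ∧ max 1 (ν 1).1 < (ν (ξ 1)).2 ∧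
  ∀ n, 1 ≤ n →
    ξ n < ξ (n + 1) ∧ (ν (ξ (n + 1))).1 = (ν (n + 1)).1 ∧
    max (ν (ξ (n + 1))).1 (ν (ξ n)).2 < (ν (ξ (n + 1))).2

/-- `R_ξ = {π(n) | n ∈ ℕ₊}` where `π = ν ∘ ξ`. -/
def Rcod (ν : ℕ → ℕ × ℕ) (ξ : ℕ → ℕ) : Set (ℕ × ℕ) :=
  {e | ∃ n, 1 ≤ n ∧ ν (ξ n) = e}

/-- `S_ξ = {(π₂(π(m)), π₂(π(n))) | m, n ∈ ℕ₊ and ν(n) = (ν(m))⁻¹}`. -/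
def Scod (ν : ℕ → ℕ × ℕ) (ξ : ℕ → ℕ) : Set (ℕ × ℕ) :=
  {e | ∃ m, 1 ≤ m ∧ ∃ n, 1 ≤ n ∧ ν n = ((ν m).2, (ν m).1) ∧
    e = ((ν (ξ m)).2, (ν (ξ n)).2)}

/-- `T_ξ = {(π₂(π(m)), π₂(π(n))) | m, n ∈ ℕ₊ and ν(n) = ν(m)}`. -/
def Tcod (ν : ℕ → ℕ × ℕ) (ξ : ℕ → ℕ) : Set (ℕ × ℕ) :=
  {e | ∃ m, 1 ≤ m ∧ ∃ n, 1 ≤ n ∧ ν n = ν m ∧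
    e = ((ν (ξ m)).2, (ν (ξ n)).2)}

/-- The identity relation `I = {(n,n) | n ∈ ℕ}`. -/
def diagRel : Set (ℕ × ℕ) := {p | p.1 = p.2}

/-- The field of a relation: `F(H) = {i | ∃ j, (i,j) ∈ H ∨ (j,i) ∈ H}`. -/
def fld (H : Set (ℕ × ℕ)) : Set ℕ := {i | ∃ j, (i, j) ∈ H ∨ (j, i) ∈ H}

/-!
Repeating every value of an enumeration infinitely often is free, by padding the index.
Interleaved codings exist for every enumeration `ν` of `E`: since the row of `ν n` is infinite, an
unbounded search from any index `a` finds a later index `m` with `ν m` in that row and second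
coordinate as large as desired. Iterating the search from the index `1`, with the rows of
`ν 1, ν 1, ν 2, ν 2, ν 3, …` as successive targets, produces a computable sequence `c`; its
odd-indexed terms form `ξ` and its even-indexed terms from index `2` on form `ζ`.
-/

/-- `m` is an admissible value of a coding of `ν` at a place where the previous value is `a` and
the required first coordinate is `i`. With previous value `1` this also implies the conditions on
the first value of a coding: this is the role of the `1` in the `max`. -/
def CodingStep (ν : ℕ → ℕ × ℕ) (i a m : ℕ) : Prop :=
  a < m ∧ (ν m).1 = i ∧ max 1 (max i (ν a).2) < (ν m).2

section Computability

variable {α β γ : Type*} [Primcodable α] [Primcodable β] [Primcodable γ]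

theorem computablePred_and {p q : α → Prop} (hp : ComputablePred p) (hq : ComputablePred q) :
    ComputablePred fun a => p a ∧ q a := by
  obtain ⟨_, hp⟩ := hp
  obtain ⟨_, hq⟩ := hq
  exact ((Primrec.and.to_comp.comp hp hq).of_eq fun a =>
    (Bool.decide_and (p a) (q a)).symm).computablePred

theorem computablePred_of_primrecRel_comp {R : β → γ → Prop} {f : α → β} {g : α → γ}
    (hR : PrimrecRel R) (hf : Computable f) (hg : Computable g) :
    ComputablePred fun a => R (f a) (g a) := by
  obtain ⟨_, hR⟩ := hR
  exact (hR.to_comp.comp (hf.pair hg)).computablePred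

theorem exists_computable_sequence {r : ℕ → ℕ → ℕ → Prop}
    (hr : ComputablePred fun x : (ℕ × ℕ) × ℕ => r x.1.1 x.1.2 x.2)
    (htotal : ∀ k a, ∃ b, r k a b) (a₀ : ℕ) :
    ∃ c : ℕ → ℕ, Computable c ∧ c 0 = a₀ ∧ ∀ k, r k (c k) (c (k + 1)) := by
  classical
  have hex : ∀ x : ℕ × ℕ, ∃ b, r x.1 x.2 b := fun x => htotal x.1 x.2
  have hnext : Computable fun x : ℕ × ℕ => Nat.find (hex x) := Computable.find hr hex
  exact ⟨Nat.rec a₀ fun k a => Nat.find (hex (k, a)),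
    Computable.nat_rec Computable.id (Computable.const a₀) (hnext.comp Computable.snd).to₂,
    rfl, fun k => Nat.find_spec (hex (k, _))⟩

end Computability

namespace CodingStep

variable {ν : ℕ → ℕ × ℕ}

theorem trans {i j a b m : ℕ} (hab : CodingStep ν i a b) (hbm : CodingStep ν j b m) :
    CodingStep ν j a m := by
  simp only [CodingStep, max_lt_iff] at *
  exact ⟨hab.1.trans hbm.1, hbm.2.1, hbm.2.2.1, hbm.2.2.2.1, hab.2.2.2.2.trans hbm.2.2.2.2⟩

theorem exists_of_infinite_row {i : ℕ} (hrow : {j | ∃ m, ν m = (i, j)}.Infinite) (a : ℕ) :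
    ∃ m, CodingStep ν i a m := by
  -- A second coordinate exceeding all those at indices up to `a` can only occur after `a`.
  let bound := (Finset.range (a + 1)).sup fun k => (ν k).2
  have le_bound : ∀ k ≤ a, (ν k).2 ≤ bound := fun k hk =>
    Finset.le_sup (f := fun k => (ν k).2) (Finset.mem_range_succ_iff.2 hk)
  obtain ⟨j, ⟨m, hm⟩, hj⟩ := hrow.exists_gt (max 1 (max i bound))
  have hbound : bound < (ν m).2 := by rw [hm]; exact (max_lt_iff.1 (max_lt_iff.1 hj).2).2
  have ham : a < m := not_le.1 fun hma => (le_bound m hma).not_gt hbound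
  refine ⟨m, ham, by rw [hm], ?_⟩
  calc max 1 (max i (ν a).2) ≤ max 1 (max i bound) := by gcongr; exact le_bound a le_rfl
    _ < (ν m).2 := by rwa [hm]

theorem computablePred (hν : Computable ν) {i : ℕ → ℕ} (hi : Computable i) :
    ComputablePred fun x : (ℕ × ℕ) × ℕ => CodingStep ν (i x.1.1) x.1.2 x.2 := by
  have hrow : Computable fun x : (ℕ × ℕ) × ℕ => i x.1.1 :=
    hi.comp (Computable.fst.comp Computable.fst)
  have hprev : Computable fun x : (ℕ × ℕ) × ℕ => x.1.2 := Computable.snd.comp Computable.fst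
  have hnew : Computable fun x : (ℕ × ℕ) × ℕ => ν x.2 := hν.comp Computable.snd
  have hmax : Computable₂ (max : ℕ → ℕ → ℕ) := Primrec.nat_max.to_comp
  have hlower : Computable fun x : (ℕ × ℕ) × ℕ => max 1 (max (i x.1.1) (ν x.1.2).2) :=
    hmax.comp (Computable.const 1) (hmax.comp hrow (Computable.snd.comp (hν.comp hprev)))
  exact computablePred_and
    (computablePred_of_primrecRel_comp Primrec.nat_lt hprev Computable.snd) <|
    computablePred_and
      (computablePred_of_primrecRel_comp Primrec.eq (Computable.fst.comp hnew) hrow)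
      (computablePred_of_primrecRel_comp Primrec.nat_lt hlower (Computable.snd.comp hnew))

theorem exists_computable_chain (hν : Computable ν) {i : ℕ → ℕ} (hi : Computable i)
    (hrow : ∀ k, {j | ∃ m, ν m = (i k, j)}.Infinite) (a₀ : ℕ) :
    ∃ c : ℕ → ℕ, Computable c ∧ c 0 = a₀ ∧ ∀ k, CodingStep ν (i k) (c k) (c (k + 1)) :=
  exists_computable_sequence (computablePred hν hi) (fun k => exists_of_infinite_row (hrow k)) a₀

theorem isCoding {ξ : ℕ → ℕ} (hξ : Computable ξ) (hfirst : CodingStep ν (ν 1).1 1 (ξ 1))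
    (hstep : ∀ n, 1 ≤ n → CodingStep ν (ν (n + 1)).1 (ξ n) (ξ (n + 1))) : IsCoding ν ξ := by
  obtain ⟨hlt, heq, hmax⟩ := hfirst
  refine ⟨hξ, hlt, heq, (max_le_max_left 1 (le_max_left _ _)).trans_lt hmax, fun n hn => ?_⟩
  obtain ⟨hlt, heq, hmax⟩ := hstep n hn
  exact ⟨hlt, heq, heq ▸ (le_max_right _ _).trans_lt hmax⟩

end CodingStep

theorem exists_interleaved_codings {ν : ℕ → ℕ × ℕ} (hν : Computable ν)
    (hrow : ∀ n, 1 ≤ n → {j | ∃ m, ν m = ((ν n).1, j)}.Infinite) :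
    ∃ ξ ζ : ℕ → ℕ, IsCoding ν ξ ∧ IsCoding ν ζ ∧
      ∀ n, 1 ≤ n → ξ n < ζ n ∧ ζ n < ξ (n + 1) := by
  have hi : Computable fun k => (ν (k / 2 + 1)).1 :=
    Computable.fst.comp <| hν.comp <|
      (Primrec.succ.comp (Primrec.nat_div.comp Primrec.id (Primrec.const 2))).to_comp
  obtain ⟨c, hc, hc0, hstep⟩ :=
    CodingStep.exists_computable_chain hν hi (fun k => hrow (k / 2 + 1) (Nat.succ_pos _)) 1
  have hdouble : Computable fun n : ℕ => 2 * n :=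
    (Primrec.nat_mul.comp (Primrec.const 2) Primrec.id).to_comp
  have to_odd (n : ℕ) : CodingStep ν (ν (n + 1)).1 (c (2 * n)) (c (2 * n + 1)) := by
    simpa only [Nat.mul_div_cancel_left n two_pos] using hstep (2 * n)
  have to_even (n : ℕ) : CodingStep ν (ν (n + 1)).1 (c (2 * n + 1)) (c (2 * n + 2)) := by
    simpa only [show (2 * n + 1) / 2 = n by lia] using hstep (2 * n + 1)
  refine ⟨fun n => c (2 * n - 1), fun n => c (2 * n),
    CodingStep.isCoding (hc.comp (Computable.pred.comp hdouble)) ?_ fun n hn => ?_,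
    CodingStep.isCoding (hc.comp hdouble) ?_ fun n _ => (to_odd n).trans (to_even n),
    fun n hn => ⟨?_, (to_odd n).1⟩⟩
  · simpa only [hc0] using to_odd 0
  · obtain ⟨m, rfl⟩ := Nat.exists_eq_add_of_le' hn
    exact (to_even m).trans (to_odd (m + 1))
  · simpa only [hc0] using (to_odd 0).trans (to_even 0)
  · obtain ⟨m, rfl⟩ := Nat.exists_eq_add_of_le' hn
    exact (to_even m).1

theorem SemiDecidableRel.exists_enumeration_infinite_fibers {R : Set (ℕ × ℕ)}
    (hR : SemiDecidableRel R) :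
    ∃ ν, IsEnumeration ν R ∧ ∀ e ∈ R, {n | 1 ≤ n ∧ ν n = e}.Infinite := by
  obtain ⟨μ, hμ, rfl⟩ := hR
  let ν : ℕ → ℕ × ℕ := fun n => μ (n.unpair.1 + 1)
  have hν : Computable ν :=
    hμ.comp (Computable.succ.comp (Computable.fst.comp Computable.unpair))
  have hfiber : ∀ e ∈ {e | ∃ n, 1 ≤ n ∧ μ n = e}, {n | 1 ≤ n ∧ ν n = e}.Infinite := by
    rintro _ ⟨k, hk, rfl⟩
    refine Set.infinite_of_injective_forall_mem (f := fun m => Nat.pair (k - 1) (m + 1))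
      (fun m m' h => ?_) fun m => ⟨?_, ?_⟩
    · exact Nat.succ_injective (Nat.pair_eq_pair.1 h).2
    · exact (Nat.succ_pos m).trans_le (Nat.right_le_pair _ _)
    · simp only [ν, Nat.unpair_pair, Nat.sub_add_cancel hk]
  refine ⟨ν, ⟨hν, Set.Subset.antisymm (fun e he => (hfiber e he).nonempty) ?_⟩, hfiber⟩
  rintro _ ⟨n, -, rfl⟩
  exact ⟨n.unpair.1 + 1, Nat.succ_pos _, rfl⟩

theorem stmt_17_general {E : Set (ℕ × ℕ)} (hsd : SemiDecidableRel E)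
    (hrow : ∀ e ∈ E, {j | (e.1, j) ∈ E}.Infinite) :
    ∃ (ν : ℕ → ℕ × ℕ) (ξ ζ : ℕ → ℕ), IsEnumeration ν E ∧
      (∀ e ∈ E, {n | 1 ≤ n ∧ ν n = e}.Infinite) ∧
      IsCoding ν ξ ∧ IsCoding ν ζ ∧
      ∀ n, 1 ≤ n → ξ n < ζ n ∧ ζ n < ξ (n + 1) := by
  obtain ⟨ν, hν, hfiber⟩ := hsd.exists_enumeration_infinite_fibers
  have mem_of_pos (n : ℕ) (hn : 1 ≤ n) : ν n ∈ E := hν.2 ▸ ⟨n, hn, rfl⟩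
  have hrow_range (n : ℕ) (hn : 1 ≤ n) : {j | ∃ m, ν m = ((ν n).1, j)}.Infinite :=
    (hrow _ (mem_of_pos n hn)).mono fun _ hj => (hfiber _ hj).nonempty.imp fun _ hm => hm.2
  obtain ⟨ξ, ζ, hξ, hζ, hlt⟩ := exists_interleaved_codings hν.1 hrow_range
  exact ⟨ν, ξ, ζ, hν, hfiber, hξ, hζ, hlt⟩

theorem stmt_17 (E : Set (ℕ × ℕ)) (hE : IsEquivRel E)
    (hsd : SemiDecidableRel E) (hIC : IC E) :
    ∃ (ν : ℕ → ℕ × ℕ) (ξ ζ : ℕ → ℕ), IsEnumeration ν E ∧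
      (∀ e ∈ E, {n | 1 ≤ n ∧ ν n = e}.Infinite) ∧
      IsCoding ν ξ ∧ IsCoding ν ζ ∧
      ∀ n, 1 ≤ n → ξ n < ζ n ∧ ζ n < ξ (n + 1) :=
  stmt_17_general hsd fun e _ => hIC e.1
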